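/- Let K be any field, let E be a finite graph, let v ∈ E^0 be a regular vertex, and let E_os be the out-split graph of E at v according to any partition of s^{-1}(v) into finitely many disjoint nonempty subsets E_1, ..., E_n. Then L_K(E) is isomorphic to L_K(E_os) as K-algebras; in particular, L_K(E) is Morita equivalent to L_K(E_os). -/

import Mathlib

/-!
Write `H` for the out-split graph of `G`, and `π : H → G` for the map forgetting superscripts. The
isomorphism `L_K(G) → L_K(H)` sends every vertex, edge and ghost edge to the sum of the generators
above it; thus `v ↦ ∑ vⁱ`, and `e ↦ ∑ eʲ` for an edge `e` into `v`. Its inverse sends a vertex `y`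
of `H` to a projection `q y`, an edge `d` to `π d * q (r d)` and a ghost edge `d*` to
`q (r d) * (π d)*`, where `q y` is the sum of `e e*` over the edges `e` of `G` in the class of
`y`, or the vertex `π y` itself when that is a sink.

Only the following properties of out-splitting matter, and they are recorded in `OutSplitting`:
each edge `e` of `G` has a class `σ e`, which is a vertex of `H` above `s e`; the edges of `H` are
the pairs `(e, y)` with `y` above `r e`, running from `σ e` to `y`; every vertex above a regular
vertex is a class; and a sink has exactly one vertex above it. From these, the `q y` are
orthogonal idempotents (`proj_mul_proj`) with `∑ q y = x` over the `y` above `x` (`sum_proj`,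
which is the Cuntz–Krieger relation at `x` when `x` is regular), so that both assignments respect
the Leavitt relations (`push`, `pull`) and are mutually inverse. Morita equivalence follows
by restriction of scalars along the isomorphism.
-/

/-! ## Finite directed graphs -/

structure FinGraph where
  V : Type
  E : Type
  [fintypeV : Fintype V]
  [fintypeE : Fintype E]
  [decEqV : DecidableEq V]
  [decEqE : DecidableEq E]
  s : E → V
  r : E → V

attribute [instance] FinGraph.fintypeV FinGraph.fintypeE FinGraph.decEqV FinGraph.decEqE

namespace FinGraph

/-- A vertex is regular if it emits at least one edge. -/
def IsRegular (G : FinGraph) (v : G.V) : Prop := ∃ e : G.E, G.s e = v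

/-- A sink emits no edges. -/
def IsSink (G : FinGraph) (v : G.V) : Prop := ∀ e : G.E, G.s e ≠ v

/-- A source receives no edges. -/
def IsSource (G : FinGraph) (v : G.V) : Prop := ∀ e : G.E, G.r e ≠ v

/-- A graph is totally looped if every regular vertex is the base of a loop. -/
def TotallyLooped (G : FinGraph) : Prop :=
  ∀ v : G.V, G.IsRegular v → ∃ e : G.E, G.s e = v ∧ G.r e = v

/-- A set of vertices is hereditary if it is closed under ranges of edges emitted
from its elements (equivalently, under reachability by paths). -/
def Hereditary (G : FinGraph) (T : Finset G.V) : Prop :=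
  ∀ e : G.E, G.s e ∈ T → G.r e ∈ T

/-- A set of vertices `H` is saturated if every regular vertex all of whose emitted
edges end in `H` belongs to `H`. -/
def Saturated (G : FinGraph) (H : Set G.V) : Prop :=
  ∀ v : G.V, G.IsRegular v → (∀ e : G.E, G.s e = v → G.r e ∈ H) → v ∈ H

/-- The trivial graph: one vertex, no edges. -/
def IsTrivial (G : FinGraph) : Prop :=
  Nonempty G.V ∧ Subsingleton G.V ∧ IsEmpty G.E

/-- A graph is source-free if every vertex receives at least one edge. -/
def IsSourceFree (G : FinGraph) : Prop := ∀ v : G.V, ∃ e : G.E, G.r e = v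

/-- The graph with `k` vertices and no edges. -/
def discrete (k : ℕ) : FinGraph where
  V := Fin k
  E := Empty
  s := Empty.elim
  r := Empty.elim

/-- The straight line graph `A_n` with `n` vertices `v_0, …, v_{n-1}` and
edges `v_{i+1} → v_i` for `0 ≤ i ≤ n-2`. -/
def line (n : ℕ) : FinGraph where
  V := Fin n
  E := Fin (n - 1)
  s := fun i => ⟨i.1 + 1, by have := i.isLt; omega⟩
  r := fun i => ⟨i.1, by have := i.isLt; omega⟩

/-- Disjoint union of two graphs. -/
def disjUnion (G H : FinGraph) : FinGraph where
  V := G.V ⊕ H.V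
  E := G.E ⊕ H.E
  s := Sum.map G.s H.s
  r := Sum.map G.r H.r

/-- The restriction graph of `G` to a hereditary set `T` of vertices. -/
def restrict (G : FinGraph) (T : Finset G.V) (hT : G.Hereditary T) : FinGraph where
  V := {v : G.V // v ∈ T}
  E := {e : G.E // G.s e ∈ T}
  s := fun e => ⟨G.s e.1, e.2⟩
  r := fun e => ⟨G.r e.1, hT e.1 e.2⟩

/-- The "strands of hair" extension `F⁺(n)` of `F`:  at each vertex `v` a strand
`v^{n v - 1} → ⋯ → v^1 → v` of length `n v - 1` is attached. -/
def hairExtension (F : FinGraph) (n : F.V → ℕ) : FinGraph where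
  V := F.V ⊕ (Σ v : F.V, Fin (n v - 1))
  E := F.E ⊕ (Σ v : F.V, Fin (n v - 1))
  s := Sum.elim (fun e => Sum.inl (F.s e)) (fun p => Sum.inr p)
  r := Sum.elim (fun e => Sum.inl (F.r e))
    (fun p => if h : (p.2 : ℕ) = 0 then Sum.inl p.1
      else Sum.inr ⟨p.1, ⟨(p.2 : ℕ) - 1, by have := p.2.isLt; omega⟩⟩)

/-- The "Move (R)" graph at a vertex `w` which emits precisely one edge `f`
which is not a loop: `w` is removed, and each edge `e` into `w` is replaced by
an edge `[ef]` from `s e` to `r f`. -/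
def moveR (E : FinGraph) (w : E.V) (f : E.E)
    (hsf : E.s f = w) (huniq : ∀ e : E.E, E.s e = w → e = f) (hnl : E.r f ≠ w) : FinGraph where
  V := {v : E.V // v ≠ w}
  E := {e : E.E // E.r e ≠ w ∧ e ≠ f} ⊕ {e : E.E // E.r e = w}
  s := Sum.elim
    (fun e => ⟨E.s e.1, fun h => e.2.2 (huniq e.1 h)⟩)
    (fun e => ⟨E.s e.1, fun h => hnl ((huniq e.1 h) ▸ e.2)⟩)
  r := Sum.elim
    (fun e => ⟨E.r e.1, e.2.1⟩)
    (fun _ => ⟨E.r f, hnl⟩)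

/-- The collapse of `E` at a vertex `v` which is not the base of a loop:
`v` is removed, and for every `e ∈ r⁻¹(v)` and `f ∈ s⁻¹(v)` an edge `[ef]`
from `s e` to `r f` is added. -/
def collapse (E : FinGraph) (v : E.V)
    (hnl : ∀ e : E.E, E.s e = v → E.r e ≠ v) : FinGraph where
  V := {u : E.V // u ≠ v}
  E := {e : E.E // E.r e ≠ v ∧ E.s e ≠ v} ⊕ ({e : E.E // E.r e = v} × {f : E.E // E.s f = v})
  s := Sum.elim
    (fun e => ⟨E.s e.1, e.2.2⟩)
    (fun p => ⟨E.s p.1.1, fun h => (hnl p.1.1 h) p.1.2⟩)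
  r := Sum.elim
    (fun e => ⟨E.r e.1, e.2.1⟩)
    (fun p => ⟨E.r p.2.1, hnl p.2.1 p.2.2⟩)

/-- The in-split graph of `E` at a vertex `v`, with respect to a partition of
`r⁻¹(v)` into `n` classes (encoded as a surjection `P : r⁻¹(v) → Fin n`). -/
def inSplit (E : FinGraph) (v : E.V) (n : ℕ) (P : {e : E.E // E.r e = v} → Fin n) : FinGraph where
  V := {u : E.V // u ≠ v} ⊕ Fin n
  E := ({e : E.E // E.s e = v} × Fin n) ⊕ {f : E.E // E.s f ≠ v}
  s := Sum.elim (fun x => Sum.inr x.2) (fun f => Sum.inl ⟨E.s f.1, f.2⟩)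
  r := Sum.elim
    (fun x => if h : E.r x.1.1 = v then Sum.inr (P ⟨x.1.1, h⟩) else Sum.inl ⟨E.r x.1.1, h⟩)
    (fun f => if h : E.r f.1 = v then Sum.inr (P ⟨f.1, h⟩) else Sum.inl ⟨E.r f.1, h⟩)

/-- The out-split graph of `E` at a vertex `v`, with respect to a partition of
`s⁻¹(v)` into `n` classes (encoded as a surjection `P : s⁻¹(v) → Fin n`). -/
def outSplit (E : FinGraph) (v : E.V) (n : ℕ) (P : {e : E.E // E.s e = v} → Fin n) : FinGraph where
  V := {u : E.V // u ≠ v} ⊕ Fin n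
  E := ({e : E.E // E.r e = v} × Fin n) ⊕ {f : E.E // E.r f ≠ v}
  r := Sum.elim (fun x => Sum.inr x.2) (fun f => Sum.inl ⟨E.r f.1, f.2⟩)
  s := Sum.elim
    (fun x => if h : E.s x.1.1 = v then Sum.inr (P ⟨x.1.1, h⟩) else Sum.inl ⟨E.s x.1.1, h⟩)
    (fun f => if h : E.s f.1 = v then Sum.inr (P ⟨f.1, h⟩) else Sum.inl ⟨E.s f.1, h⟩)

/-- The source elimination graph `E \ v` at a source `v`. -/
def sourceElim (E : FinGraph) (v : E.V) (hsrc : E.IsSource v) : FinGraph where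
  V := {u : E.V // u ≠ v}
  E := {e : E.E // E.s e ≠ v}
  s := fun e => ⟨E.s e.1, e.2⟩
  r := fun e => ⟨E.r e.1, fun h => hsrc e.1 h⟩

/-- A chain of source eliminations starting at `E`. -/
inductive ElimChain (E : FinGraph) : FinGraph → Type 1
  | refl : ElimChain E E
  | step {H : FinGraph} (c : ElimChain E H) (v : H.V) (hsrc : H.IsSource v) :
      ElimChain E (H.sourceElim v hsrc)

/-- The canonical (injective) map from the vertices of the final graph of a
source elimination chain back into the vertices of the initial graph. -/
def ElimChain.vmap {E : FinGraph} : {F : FinGraph} → ElimChain E F → F.V → E.V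
  | _, .refl, u => u
  | _, .step c _ _, u => c.vmap u.1

/-- A chain of collapses, each performed at a regular vertex which is not the
base of a loop. -/
inductive CollapseChain (E : FinGraph) : FinGraph → Prop
  | refl : CollapseChain E E
  | step {H : FinGraph} (c : CollapseChain E H) (v : H.V) (hreg : H.IsRegular v)
      (hnl : ∀ e : H.E, H.s e = v → H.r e ≠ v) :
      CollapseChain E (H.collapse v hnl)

end FinGraph

/-! ## Leavitt path algebras -/

/-- Generators of the Leavitt path algebra: vertices, edges, and ghost edges. -/
inductive LPAGen (G : FinGraph) : Type
  | vert : G.V → LPAGen G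
  | edge : G.E → LPAGen G
  | ghost : G.E → LPAGen G

/-- The defining relations of the Leavitt path algebra of a finite graph. -/
inductive LeavittRel (K : Type) [Field K] (G : FinGraph) :
    FreeAlgebra K (LPAGen G) → FreeAlgebra K (LPAGen G) → Prop
  | vertMul (v w : G.V) :
      LeavittRel K G (FreeAlgebra.ι K (LPAGen.vert v) * FreeAlgebra.ι K (LPAGen.vert w))
        (if v = w then FreeAlgebra.ι K (LPAGen.vert v) else 0)
  | edgeLeft (e : G.E) :
      LeavittRel K G (FreeAlgebra.ι K (LPAGen.vert (G.s e)) * FreeAlgebra.ι K (LPAGen.edge e))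
        (FreeAlgebra.ι K (LPAGen.edge e))
  | edgeRight (e : G.E) :
      LeavittRel K G (FreeAlgebra.ι K (LPAGen.edge e) * FreeAlgebra.ι K (LPAGen.vert (G.r e)))
        (FreeAlgebra.ι K (LPAGen.edge e))
  | ghostLeft (e : G.E) :
      LeavittRel K G (FreeAlgebra.ι K (LPAGen.vert (G.r e)) * FreeAlgebra.ι K (LPAGen.ghost e))
        (FreeAlgebra.ι K (LPAGen.ghost e))
  | ghostRight (e : G.E) :
      LeavittRel K G (FreeAlgebra.ι K (LPAGen.ghost e) * FreeAlgebra.ι K (LPAGen.vert (G.s e)))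
        (FreeAlgebra.ι K (LPAGen.ghost e))
  | ghostEdge (e f : G.E) :
      LeavittRel K G (FreeAlgebra.ι K (LPAGen.ghost e) * FreeAlgebra.ι K (LPAGen.edge f))
        (if e = f then FreeAlgebra.ι K (LPAGen.vert (G.r e)) else 0)
  | cuntzKrieger (v : G.V) (hv : G.IsRegular v) :
      LeavittRel K G (FreeAlgebra.ι K (LPAGen.vert v))
        (∑ e ∈ Finset.univ.filter (fun e : G.E => G.s e = v),
          FreeAlgebra.ι K (LPAGen.edge e) * FreeAlgebra.ι K (LPAGen.ghost e))
  | unit :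
      LeavittRel K G 1 (∑ v : G.V, FreeAlgebra.ι K (LPAGen.vert v))

/-- The Leavitt path algebra `L_K(G)` of a finite graph `G` with coefficients in
a field `K`. -/
abbrev LeavittPathAlgebra (K : Type) [Field K] (G : FinGraph) : Type :=
  RingQuot (LeavittRel K G)

namespace LeavittPathAlgebra

variable (K : Type) [Field K] (G : FinGraph)

/-- The image of a vertex in the Leavitt path algebra. -/
def vert (v : G.V) : LeavittPathAlgebra K G :=
  RingQuot.mkAlgHom K (LeavittRel K G) (FreeAlgebra.ι K (LPAGen.vert v))

/-- The image of an edge in the Leavitt path algebra. -/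
def edge (e : G.E) : LeavittPathAlgebra K G :=
  RingQuot.mkAlgHom K (LeavittRel K G) (FreeAlgebra.ι K (LPAGen.edge e))

/-- The image of a ghost edge in the Leavitt path algebra. -/
def ghost (e : G.E) : LeavittPathAlgebra K G :=
  RingQuot.mkAlgHom K (LeavittRel K G) (FreeAlgebra.ι K (LPAGen.ghost e))

end LeavittPathAlgebra

/-! ## Ring-theoretic notions -/

/-- Two unital rings are Morita equivalent if their categories of left modules
are equivalent. -/
def MoritaEquivalent (R S : Type) [Ring R] [Ring S] : Prop :=
  Nonempty (ModuleCat.{0} R ≌ ModuleCat.{0} S)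

/-- An idempotent `e` of a ring `R` is full if `R e R = R`, i.e. `1` is a finite
sum of elements of the form `a * e * b`. -/
def IsFullIdempotent {R : Type} [Ring R] (e : R) : Prop :=
  IsIdempotentElem e ∧ ∃ (n : ℕ) (a b : Fin n → R), (∑ i, a i * e * b i) = 1

/-- `S` is isomorphic, as a (nonunital) `K`-algebra, to the corner ring
`ε R ε = {x : R | ε * x * ε = x}` of `R`. -/
def IsCornerIso (K : Type) [Field K] (S R : Type) [Ring S] [Ring R]
    [Algebra K S] [Algebra K R] (ε : R) : Prop :=
  ∃ φ : S →ₙₐ[K] R, Function.Injective φ ∧ Set.range φ = {x : R | ε * x * ε = x}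

/-- A module `Q` is a generator for the category of left `R`-modules iff `R` is
an epimorphic image (equivalently, a direct summand) of a finite direct sum of
copies of `Q`. -/
def IsGenerator (R Q : Type) [Ring R] [AddCommGroup Q] [Module R Q] : Prop :=
  ∃ (n : ℕ) (f : (Fin n → Q) →ₗ[R] R), Function.Surjective f

/-! ### Leavitt families and the universal property -/

/-- A Leavitt `G`-family in a `K`-algebra `A`: elements of `A` indexed by the vertices, edges and
ghost edges of `G` that satisfy the defining relations of `L_K(G)`. -/
structure LeavittFamily (G : FinGraph) (A : Type) [Ring A] where
  p : G.V → A
  t : G.E → A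
  ghost : G.E → A
  p_mul_p : ∀ x y, p x * p y = if x = y then p x else 0
  p_mul_t : ∀ e, p (G.s e) * t e = t e
  t_mul_p : ∀ e, t e * p (G.r e) = t e
  p_mul_ghost : ∀ e, p (G.r e) * ghost e = ghost e
  ghost_mul_p : ∀ e, ghost e * p (G.s e) = ghost e
  ghost_mul_t : ∀ e f, ghost e * t f = if e = f then p (G.r e) else 0
  ck : ∀ x, G.IsRegular x → p x = ∑ e with G.s e = x, t e * ghost e
  one_eq : 1 = ∑ x, p x

namespace LeavittFamily

variable {K : Type} [Field K] {G : FinGraph} {A : Type} [Ring A]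

lemma p_mul_p_self (F : LeavittFamily G A) (x : G.V) : F.p x * F.p x = F.p x := by
  simp [F.p_mul_p]

lemma p_mul_t_ite (F : LeavittFamily G A) (x : G.V) (e : G.E) :
    F.p x * F.t e = if x = G.s e then F.t e else 0 := by
  rw [← F.p_mul_t e, ← mul_assoc, F.p_mul_p]
  split_ifs with h
  · rw [h]
  · simp

lemma t_mul_p_ite (F : LeavittFamily G A) (x : G.V) (e : G.E) :
    F.t e * F.p x = if G.r e = x then F.t e else 0 := by
  rw [← F.t_mul_p e, mul_assoc, F.p_mul_p]
  split_ifs <;> simp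

lemma p_mul_ghost_ite (F : LeavittFamily G A) (x : G.V) (e : G.E) :
    F.p x * F.ghost e = if x = G.r e then F.ghost e else 0 := by
  rw [← F.p_mul_ghost e, ← mul_assoc, F.p_mul_p]
  split_ifs with h
  · rw [h]
  · simp

lemma ghost_mul_p_ite (F : LeavittFamily G A) (x : G.V) (e : G.E) :
    F.ghost e * F.p x = if G.s e = x then F.ghost e else 0 := by
  rw [← F.ghost_mul_p e, mul_assoc, F.p_mul_p]
  split_ifs <;> simp

lemma t_mul_ghost_of_ne (F : LeavittFamily G A) {d e : G.E} (h : G.r d ≠ G.r e) :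
    F.t d * F.ghost e = 0 := by
  rw [← F.t_mul_p d, mul_assoc, F.p_mul_ghost_ite, if_neg h, mul_zero]

variable (K G) in
/-- The generators of `L_K(G)`, as a Leavitt `G`-family. -/
noncomputable def canon : LeavittFamily G (LeavittPathAlgebra K G) where
  p := LeavittPathAlgebra.vert K G
  t := LeavittPathAlgebra.edge K G
  ghost := LeavittPathAlgebra.ghost K G
  p_mul_p x y := by
    have h := RingQuot.mkAlgHom_rel K (LeavittRel.vertMul (K := K) (G := G) x y)
    rw [map_mul, apply_ite (RingQuot.mkAlgHom K (LeavittRel K G)), map_zero] at h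
    exact h
  p_mul_t e := by
    have h := RingQuot.mkAlgHom_rel K (LeavittRel.edgeLeft (K := K) (G := G) e)
    rwa [map_mul] at h
  t_mul_p e := by
    have h := RingQuot.mkAlgHom_rel K (LeavittRel.edgeRight (K := K) (G := G) e)
    rwa [map_mul] at h
  p_mul_ghost e := by
    have h := RingQuot.mkAlgHom_rel K (LeavittRel.ghostLeft (K := K) (G := G) e)
    rwa [map_mul] at h
  ghost_mul_p e := by
    have h := RingQuot.mkAlgHom_rel K (LeavittRel.ghostRight (K := K) (G := G) e)
    rwa [map_mul] at h
  ghost_mul_t e f := by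
    have h := RingQuot.mkAlgHom_rel K (LeavittRel.ghostEdge (K := K) (G := G) e f)
    rw [map_mul, apply_ite (RingQuot.mkAlgHom K (LeavittRel K G)), map_zero] at h
    exact h
  ck x hx := by
    have h := RingQuot.mkAlgHom_rel K (LeavittRel.cuntzKrieger (K := K) (G := G) x hx)
    simp only [map_sum, map_mul] at h
    exact h
  one_eq := by
    have h := RingQuot.mkAlgHom_rel K (LeavittRel.unit (K := K) (G := G))
    simp only [map_sum, map_one] at h
    exact h

/-- The assignment of a Leavitt family to the generators of the free algebra. -/
def gen (F : LeavittFamily G A) : LPAGen G → A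
  | .vert x => F.p x
  | .edge e => F.t e
  | .ghost e => F.ghost e

variable [Algebra K A]

variable (K) in
/-- The universal property of `L_K(G)`: a Leavitt family induces an algebra homomorphism. -/
noncomputable def lift (F : LeavittFamily G A) : LeavittPathAlgebra K G →ₐ[K] A :=
  RingQuot.liftAlgHom K ⟨FreeAlgebra.lift K F.gen, by
    intro a b h
    induction h with
    | vertMul x y =>
      simpa [gen, apply_ite (FreeAlgebra.lift K F.gen)] using F.p_mul_p x y
    | edgeLeft e => simpa [gen] using F.p_mul_t e
    | edgeRight e => simpa [gen] using F.t_mul_p e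
    | ghostLeft e => simpa [gen] using F.p_mul_ghost e
    | ghostRight e => simpa [gen] using F.ghost_mul_p e
    | ghostEdge e f =>
      simpa [gen, apply_ite (FreeAlgebra.lift K F.gen)] using F.ghost_mul_t e f
    | cuntzKrieger x hx => simpa [gen] using F.ck x hx
    | unit => simpa [gen] using F.one_eq⟩

@[simp] lemma lift_p (F : LeavittFamily G A) (x : G.V) : F.lift K ((canon K G).p x) = F.p x := by
  simp [lift, canon, LeavittPathAlgebra.vert, gen]

@[simp] lemma lift_t (F : LeavittFamily G A) (e : G.E) : F.lift K ((canon K G).t e) = F.t e := by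
  simp [lift, canon, LeavittPathAlgebra.edge, gen]

@[simp] lemma lift_ghost (F : LeavittFamily G A) (e : G.E) :
    F.lift K ((canon K G).ghost e) = F.ghost e := by
  simp [lift, canon, LeavittPathAlgebra.ghost, gen]

lemma algHom_ext {f g : LeavittPathAlgebra K G →ₐ[K] A}
    (hp : ∀ x, f ((canon K G).p x) = g ((canon K G).p x))
    (ht : ∀ e, f ((canon K G).t e) = g ((canon K G).t e))
    (ht' : ∀ e, f ((canon K G).ghost e) = g ((canon K G).ghost e)) : f = g := by
  apply RingQuot.ringQuot_ext'
  ext x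
  cases x with
  | vert x => exact hp x
  | edge e => exact ht e
  | ghost e => exact ht' e

end LeavittFamily

/-! ### Complete out-splittings -/

/-- A complete out-splitting `H → G`: every edge `e` of `G` is assigned a vertex `σ e` of `H`
above its source, the edges of `H` are the pairs `(e, y)` with `y` above the range of `e`, such a
pair running from `σ e` to `y`; every vertex above a regular vertex of `G` is some `σ e`, and
there is exactly one vertex above each sink. -/
structure OutSplitting (G H : FinGraph) where
  πV : H.V → G.V
  πE : H.E → G.E
  σ : G.E → H.V
  s_eq : ∀ d, H.s d = σ (πE d)
  πV_σ : ∀ e, πV (σ e) = G.s e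
  πV_r : ∀ d, πV (H.r d) = G.r (πE d)
  edge_ext : ∀ d d', πE d = πE d' → H.r d = H.r d' → d = d'
  exists_edge : ∀ e y, πV y = G.r e → ∃ d, πE d = e ∧ H.r d = y
  exists_σ : ∀ y, G.IsRegular (πV y) → ∃ e, σ e = y
  eq_of_sink : ∀ y z, πV y = πV z → ¬ G.IsRegular (πV y) → y = z
  surj : Function.Surjective πV

lemma sum_fiber {α β A : Type} [Fintype α] [Fintype β] [DecidableEq α] [AddCommMonoid A]
    (π : β → α) (q : α → Prop) [DecidablePred q] (f : β → A) :
    ∑ a with q a, ∑ b with π b = a, f b = ∑ b with q (π b), f b := by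
  rw [Finset.sum_fiberwise_eq_sum_filter]
  simp

namespace OutSplitting

variable {K : Type} [Field K] {G H : FinGraph} (S : OutSplitting G H)
  {A : Type} [Ring A]

lemma isRegular_πV {y : H.V} {e : G.E} (h : S.σ e = y) : G.IsRegular (S.πV y) :=
  ⟨e, by rw [← h, S.πV_σ]⟩

lemma isRegular_σ (e : G.E) : H.IsRegular (S.σ e) := by
  obtain ⟨y, hy⟩ := S.surj (G.r e)
  obtain ⟨d, hd, -⟩ := S.exists_edge e y hy
  exact ⟨d, by rw [S.s_eq, hd]⟩

/-- Edges of `H` above `e` correspond to vertices above `r e`. -/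
lemma sum_edge (e : G.E) (f : H.V → A) :
    ∑ d with S.πE d = e, f (H.r d) = ∑ y with S.πV y = G.r e, f y := by
  refine Finset.sum_bij (fun d _ => H.r d) ?_ ?_ ?_ ?_
  · intro d hd
    simp only [Finset.mem_filter, Finset.mem_univ, true_and] at hd ⊢
    rw [S.πV_r, hd]
  · intro d hd d' hd' h
    simp only [Finset.mem_filter, Finset.mem_univ, true_and] at hd hd'
    exact S.edge_ext d d' (hd.trans hd'.symm) h
  · intro y hy
    simp only [Finset.mem_filter, Finset.mem_univ, true_and] at hy
    obtain ⟨d, hd, h⟩ := S.exists_edge e y hy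
    exact ⟨d, by simpa using hd, h⟩
  · intros; rfl

/-- Off-diagonal terms `d d'*` of two edges above the same `e` vanish, as `d` and `d'` then have
different ranges. -/
lemma sum_t_mul_sum_ghost (F : LeavittFamily H A) (e : G.E) :
    (∑ d with S.πE d = e, F.t d) * ∑ d with S.πE d = e, F.ghost d =
      ∑ d with S.πE d = e, F.t d * F.ghost d := by
  rw [Finset.sum_mul]
  refine Finset.sum_congr rfl fun d hd => ?_
  rw [Finset.mul_sum]
  refine Finset.sum_eq_single_of_mem d hd fun d' hd' hne => F.t_mul_ghost_of_ne fun h => hne ?_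
  simp only [Finset.mem_filter, Finset.mem_univ, true_and] at hd hd'
  exact S.edge_ext _ _ (hd'.trans hd.symm) h.symm

/-! ### Summing a family along the fibres -/

/-- A Leavitt `H`-family summed along the fibres of an out-splitting is a Leavitt `G`-family. -/
def push (F : LeavittFamily H A) : LeavittFamily G A where
  p x := ∑ y with S.πV y = x, F.p y
  t e := ∑ d with S.πE d = e, F.t d
  ghost e := ∑ d with S.πE d = e, F.ghost d
  p_mul_p x x' := by
    simp only [Finset.sum_mul, Finset.mul_sum, F.p_mul_p]
    split_ifs with h
    · subst h
      refine Finset.sum_congr rfl fun y hy => ?_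
      simp only [Finset.mem_filter, Finset.mem_univ, true_and] at hy
      simp [hy]
    · refine Finset.sum_eq_zero fun y hy => Finset.sum_eq_zero fun z hz => if_neg ?_
      rintro rfl
      simp_all
  p_mul_t e := by
    rw [Finset.mul_sum]
    refine Finset.sum_congr rfl fun d hd => ?_
    simp only [Finset.mem_filter, Finset.mem_univ, true_and] at hd
    rw [Finset.sum_mul, Finset.sum_eq_single_of_mem (H.s d), F.p_mul_t]
    · simp [S.s_eq, S.πV_σ, hd]
    · intro y _ hy
      rw [F.p_mul_t_ite, if_neg hy]
  t_mul_p e := by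
    rw [Finset.sum_mul]
    refine Finset.sum_congr rfl fun d hd => ?_
    simp only [Finset.mem_filter, Finset.mem_univ, true_and] at hd
    rw [Finset.mul_sum, Finset.sum_eq_single_of_mem (H.r d), F.t_mul_p]
    · simp [S.πV_r, hd]
    · intro y _ hy
      rw [F.t_mul_p_ite, if_neg hy.symm]
  p_mul_ghost e := by
    rw [Finset.mul_sum]
    refine Finset.sum_congr rfl fun d hd => ?_
    simp only [Finset.mem_filter, Finset.mem_univ, true_and] at hd
    rw [Finset.sum_mul, Finset.sum_eq_single_of_mem (H.r d), F.p_mul_ghost]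
    · simp [S.πV_r, hd]
    · intro y _ hy
      rw [F.p_mul_ghost_ite, if_neg hy]
  ghost_mul_p e := by
    rw [Finset.sum_mul]
    refine Finset.sum_congr rfl fun d hd => ?_
    simp only [Finset.mem_filter, Finset.mem_univ, true_and] at hd
    rw [Finset.mul_sum, Finset.sum_eq_single_of_mem (H.s d), F.ghost_mul_p]
    · simp [S.s_eq, S.πV_σ, hd]
    · intro y _ hy
      rw [F.ghost_mul_p_ite, if_neg hy.symm]
  ghost_mul_t e f := by
    simp only [Finset.sum_mul, Finset.mul_sum, F.ghost_mul_t]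
    split_ifs with h
    · subst h
      rw [← S.sum_edge]
      refine Finset.sum_congr rfl fun d hd => ?_
      simp only [Finset.mem_filter, Finset.mem_univ, true_and] at hd
      simp [hd]
    · refine Finset.sum_eq_zero fun y hy => Finset.sum_eq_zero fun z hz => if_neg ?_
      rintro rfl
      simp_all
  ck x hx := by
    simp only [S.sum_t_mul_sum_ghost]
    rw [sum_fiber S.πE (fun e => G.s e = x)]
    have h : ∀ y ∈ Finset.univ.filter (fun y => S.πV y = x),
        F.p y = ∑ d with H.s d = y, F.t d * F.ghost d := by
      intro y hy
      simp only [Finset.mem_filter, Finset.mem_univ, true_and] at hy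
      obtain ⟨e, rfl⟩ := S.exists_σ y (by rwa [hy])
      exact F.ck _ (S.isRegular_σ e)
    rw [Finset.sum_congr rfl h, sum_fiber H.s (fun y => S.πV y = x)]
    simp only [S.s_eq, S.πV_σ]
  one_eq := by
    rw [F.one_eq, Finset.sum_fiberwise]

/-! ### Projections of a `G`-family indexed by the vertices of `H` -/

/-- The projection attached to a vertex `y` of `H` by a Leavitt `G`-family: `∑ e e*` over the
edges `e` with `σ e = y`, or the vertex below `y` when that vertex is a sink. -/
def proj (F : LeavittFamily G A) (y : H.V) : A :=
  if ∃ e, S.σ e = y then ∑ e with S.σ e = y, F.t e * F.ghost e else F.p (S.πV y)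

lemma proj_σ (F : LeavittFamily G A) (e : G.E) :
    S.proj F (S.σ e) = ∑ e' with S.σ e' = S.σ e, F.t e' * F.ghost e' :=
  if_pos ⟨e, rfl⟩

lemma proj_σ_mul_t (F : LeavittFamily G A) (e : G.E) : S.proj F (S.σ e) * F.t e = F.t e := by
  rw [proj_σ, Finset.sum_mul, Finset.sum_eq_single_of_mem e (by simp)]
  · rw [mul_assoc, F.ghost_mul_t, if_pos rfl, F.t_mul_p]
  · intro e' _ h
    rw [mul_assoc, F.ghost_mul_t, if_neg h, mul_zero]

lemma ghost_mul_proj_σ (F : LeavittFamily G A) (e : G.E) : F.ghost e * S.proj F (S.σ e) = F.ghost e := by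
  rw [proj_σ, Finset.mul_sum, Finset.sum_eq_single_of_mem e (by simp)]
  · rw [← mul_assoc, F.ghost_mul_t, if_pos rfl, F.p_mul_ghost]
  · intro e' _ h
    rw [← mul_assoc, F.ghost_mul_t, if_neg h.symm, zero_mul]

lemma p_mul_proj (F : LeavittFamily G A) (y : H.V) :
    F.p (S.πV y) * S.proj F y = S.proj F y := by
  unfold proj
  split_ifs with h
  · rw [Finset.mul_sum]
    refine Finset.sum_congr rfl fun e he => ?_
    simp only [Finset.mem_filter, Finset.mem_univ, true_and] at he
    rw [← mul_assoc, ← he, S.πV_σ, F.p_mul_t]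
  · exact F.p_mul_p_self _

lemma proj_mul_p (F : LeavittFamily G A) (y : H.V) :
    S.proj F y * F.p (S.πV y) = S.proj F y := by
  unfold proj
  split_ifs with h
  · rw [Finset.sum_mul]
    refine Finset.sum_congr rfl fun e he => ?_
    simp only [Finset.mem_filter, Finset.mem_univ, true_and] at he
    rw [mul_assoc, ← he, S.πV_σ, F.ghost_mul_p]
  · exact F.p_mul_p_self _

lemma proj_mul_proj (F : LeavittFamily G A) (y z : H.V) :
    S.proj F y * S.proj F z = if y = z then S.proj F y else 0 := by
  by_cases hπ : S.πV y = S.πV z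
  · by_cases hy : G.IsRegular (S.πV y)
    · obtain ⟨e, rfl⟩ := S.exists_σ y hy
      obtain ⟨f, rfl⟩ := S.exists_σ z (hπ ▸ hy)
      have h : ∀ e' ∈ Finset.univ.filter (fun e' => S.σ e' = S.σ e),
          F.t e' * F.ghost e' * S.proj F (S.σ f) =
            if S.σ e = S.σ f then F.t e' * F.ghost e' else 0 := by
        intro e' he'
        simp only [Finset.mem_filter, Finset.mem_univ, true_and] at he'
        split_ifs with hef
        · rw [← hef, ← he', mul_assoc, S.ghost_mul_proj_σ]
        · rw [S.proj_σ, Finset.mul_sum]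
          refine Finset.sum_eq_zero fun f' hf' => ?_
          simp only [Finset.mem_filter, Finset.mem_univ, true_and] at hf'
          have hne : e' ≠ f' := by
            rintro rfl
            exact hef (he'.symm.trans hf')
          rw [mul_assoc, ← mul_assoc (F.ghost e'), F.ghost_mul_t, if_neg hne, zero_mul, mul_zero]
      rw [S.proj_σ F e, Finset.sum_mul, Finset.sum_congr rfl h]
      split_ifs <;> simp
    · obtain rfl := S.eq_of_sink y z hπ hy
      have h : ¬ ∃ e, S.σ e = y := fun ⟨e, he⟩ => hy (S.isRegular_πV he)
      simp [proj, h, F.p_mul_p_self]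
  · rw [if_neg (mt (congrArg S.πV) hπ), ← S.proj_mul_p, ← S.p_mul_proj F z, mul_assoc,
      ← mul_assoc (F.p _), F.p_mul_p, if_neg hπ, zero_mul, mul_zero]

lemma sum_proj (F : LeavittFamily G A) (x : G.V) : ∑ y with S.πV y = x, S.proj F y = F.p x := by
  by_cases hx : G.IsRegular x
  · have h : ∀ y ∈ Finset.univ.filter (fun y => S.πV y = x),
        S.proj F y = ∑ e with S.σ e = y, F.t e * F.ghost e := by
      intro y hy
      simp only [Finset.mem_filter, Finset.mem_univ, true_and] at hy
      exact if_pos (S.exists_σ y (by rwa [hy]))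
    rw [Finset.sum_congr rfl h, sum_fiber S.σ (fun y => S.πV y = x), F.ck x hx]
    simp only [S.πV_σ]
  · obtain ⟨y, rfl⟩ := S.surj x
    rw [Finset.sum_eq_single_of_mem y (by simp)]
    · exact if_neg fun ⟨e, he⟩ => hx (S.isRegular_πV he)
    · intro z hz hne
      simp only [Finset.mem_filter, Finset.mem_univ, true_and] at hz
      exact absurd (S.eq_of_sink y z hz.symm hx).symm hne

/-- A Leavitt `G`-family induces a Leavitt `H`-family: a vertex `y` goes to its projection, and
an edge `(e, y)` to `e` cut down by the projection of `y`. -/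
def pull (F : LeavittFamily G A) : LeavittFamily H A where
  p y := S.proj F y
  t d := F.t (S.πE d) * S.proj F (H.r d)
  ghost d := S.proj F (H.r d) * F.ghost (S.πE d)
  p_mul_p := S.proj_mul_proj F
  p_mul_t d := by rw [S.s_eq, ← mul_assoc, S.proj_σ_mul_t]
  t_mul_p d := by rw [mul_assoc, S.proj_mul_proj, if_pos rfl]
  p_mul_ghost d := by rw [← mul_assoc, S.proj_mul_proj, if_pos rfl]
  ghost_mul_p d := by rw [S.s_eq, mul_assoc, S.ghost_mul_proj_σ]
  ghost_mul_t d d' := by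
    rw [mul_assoc, ← mul_assoc (F.ghost _), F.ghost_mul_t]
    by_cases h : S.πE d = S.πE d'
    · rw [if_pos h, ← S.πV_r, ← mul_assoc, S.proj_mul_p, S.proj_mul_proj]
      by_cases hr : H.r d = H.r d'
      · rw [if_pos hr, if_pos (S.edge_ext d d' h hr)]
      · rw [if_neg hr, if_neg (mt (congrArg H.r) hr)]
    · rw [if_neg h, if_neg (mt (congrArg S.πE) h), zero_mul, mul_zero]
  ck y hy := by
    obtain ⟨d, rfl⟩ := hy
    rw [S.s_eq, S.proj_σ]
    simp only [S.s_eq]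
    rw [← sum_fiber S.πE (fun e => S.σ e = S.σ (S.πE d))]
    refine Finset.sum_congr rfl fun e _ => ?_
    have h : ∀ d' ∈ Finset.univ.filter (fun d' => S.πE d' = e),
        F.t (S.πE d') * S.proj F (H.r d') * (S.proj F (H.r d') * F.ghost (S.πE d')) =
          F.t e * S.proj F (H.r d') * F.ghost e := by
      intro d' hd'
      simp only [Finset.mem_filter, Finset.mem_univ, true_and] at hd'
      rw [hd', mul_assoc, ← mul_assoc (S.proj F _), S.proj_mul_proj, if_pos rfl, mul_assoc]
    rw [Finset.sum_congr rfl h, ← Finset.sum_mul, ← Finset.mul_sum, S.sum_edge e (S.proj F),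
      S.sum_proj, F.t_mul_p]
  one_eq := by
    rw [F.one_eq, ← Finset.sum_fiberwise Finset.univ S.πV]
    exact Finset.sum_congr rfl fun x _ => (S.sum_proj F x).symm

/-! ### The two constructions are mutually inverse -/

lemma push_pull_p (F : LeavittFamily G A) (x : G.V) : (S.push (S.pull F)).p x = F.p x :=
  S.sum_proj F x

lemma push_pull_t (F : LeavittFamily G A) (e : G.E) : (S.push (S.pull F)).t e = F.t e := by
  have h : ∀ d ∈ Finset.univ.filter (fun d => S.πE d = e),
      (S.pull F).t d = F.t e * S.proj F (H.r d) := by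
    intro d hd
    simp only [Finset.mem_filter, Finset.mem_univ, true_and] at hd
    simp only [pull, hd]
  change ∑ d with S.πE d = e, (S.pull F).t d = _
  rw [Finset.sum_congr rfl h, ← Finset.mul_sum, S.sum_edge e (S.proj F), S.sum_proj, F.t_mul_p]

lemma push_pull_ghost (F : LeavittFamily G A) (e : G.E) : (S.push (S.pull F)).ghost e = F.ghost e := by
  have h : ∀ d ∈ Finset.univ.filter (fun d => S.πE d = e),
      (S.pull F).ghost d = S.proj F (H.r d) * F.ghost e := by
    intro d hd
    simp only [Finset.mem_filter, Finset.mem_univ, true_and] at hd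
    simp only [pull, hd]
  change ∑ d with S.πE d = e, (S.pull F).ghost d = _
  rw [Finset.sum_congr rfl h, ← Finset.sum_mul, S.sum_edge e (S.proj F), S.sum_proj, F.p_mul_ghost]

lemma pull_push_p (F : LeavittFamily H A) (y : H.V) : (S.pull (S.push F)).p y = F.p y := by
  change S.proj (S.push F) y = _
  by_cases hy : G.IsRegular (S.πV y)
  · obtain ⟨e, rfl⟩ := S.exists_σ y hy
    rw [S.proj_σ, F.ck _ (S.isRegular_σ e)]
    simp only [push, S.sum_t_mul_sum_ghost, S.s_eq]
    rw [sum_fiber S.πE (fun e' => S.σ e' = S.σ e)]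
  · rw [proj, if_neg fun ⟨e, he⟩ => hy (S.isRegular_πV he)]
    change ∑ z with S.πV z = S.πV y, F.p z = _
    refine Finset.sum_eq_single_of_mem y (by simp) fun z hz hne => ?_
    simp only [Finset.mem_filter, Finset.mem_univ, true_and] at hz
    exact absurd (S.eq_of_sink y z hz.symm hy).symm hne

lemma pull_push_t (F : LeavittFamily H A) (d : H.E) : (S.pull (S.push F)).t d = F.t d := by
  change (∑ d' with S.πE d' = S.πE d, F.t d') * (S.pull (S.push F)).p (H.r d) = _
  rw [S.pull_push_p, Finset.sum_mul, Finset.sum_eq_single_of_mem d (by simp), F.t_mul_p]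
  intro d' hd' hne
  simp only [Finset.mem_filter, Finset.mem_univ, true_and] at hd'
  rw [F.t_mul_p_ite, if_neg fun h => hne (S.edge_ext _ _ hd' h)]

lemma pull_push_ghost (F : LeavittFamily H A) (d : H.E) : (S.pull (S.push F)).ghost d = F.ghost d := by
  change (S.pull (S.push F)).p (H.r d) * (∑ d' with S.πE d' = S.πE d, F.ghost d') = _
  rw [S.pull_push_p, Finset.mul_sum, Finset.sum_eq_single_of_mem d (by simp), F.p_mul_ghost]
  intro d' hd' hne
  simp only [Finset.mem_filter, Finset.mem_univ, true_and] at hd'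
  rw [F.p_mul_ghost_ite, if_neg fun h => hne (S.edge_ext _ _ hd' h.symm)]

variable (K) in
/-- The isomorphism `L_K(G) ≃ L_K(H)` sending each generator to the sum of its fibre. -/
noncomputable def algEquiv : LeavittPathAlgebra K G ≃ₐ[K] LeavittPathAlgebra K H :=
  AlgEquiv.ofAlgHom
    ((S.push (LeavittFamily.canon K H)).lift K)
    ((S.pull (LeavittFamily.canon K G)).lift K)
    (by
      have hp : ∀ x, ((S.push (LeavittFamily.canon K H)).lift K)
          (S.proj (LeavittFamily.canon K G) x) = (LeavittFamily.canon K H).p x := by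
        intro x
        rw [← S.pull_push_p (LeavittFamily.canon K H) x]
        simp only [pull, proj]
        split_ifs <;> simp
      refine LeavittFamily.algHom_ext (fun x => ?_) (fun e => ?_) fun e => ?_
      · simpa [pull] using hp x
      · simp only [AlgHom.comp_apply, LeavittFamily.lift_t, AlgHom.id_apply]
        rw [← S.pull_push_t (LeavittFamily.canon K H) e]
        change _ = _ * (S.pull (S.push (LeavittFamily.canon K H))).p (H.r e)
        rw [S.pull_push_p]
        simp [pull, hp]
      · simp only [AlgHom.comp_apply, LeavittFamily.lift_ghost, AlgHom.id_apply]
        rw [← S.pull_push_ghost (LeavittFamily.canon K H) e]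
        change _ = (S.pull (S.push (LeavittFamily.canon K H))).p (H.r e) * _
        rw [S.pull_push_p]
        simp [pull, hp])
    (by
      refine LeavittFamily.algHom_ext (fun x => ?_) (fun e => ?_) fun e => ?_
      · rw [AlgHom.comp_apply, LeavittFamily.lift_p, AlgHom.id_apply]
        refine Eq.trans ?_ (S.push_pull_p _ x)
        simp [push]
      · rw [AlgHom.comp_apply, LeavittFamily.lift_t, AlgHom.id_apply]
        refine Eq.trans ?_ (S.push_pull_t _ e)
        simp [push]
      · rw [AlgHom.comp_apply, LeavittFamily.lift_ghost, AlgHom.id_apply]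
        refine Eq.trans ?_ (S.push_pull_ghost _ e)
        simp [push])

end OutSplitting

/-! ### Out-splitting at one vertex -/

/-- Out-splitting at a single vertex `v` is a complete out-splitting: at a vertex other than `v`
all emitted edges form one class. -/
def FinGraph.outSplitOutSplitting (E : FinGraph) (v : E.V) (hreg : E.IsRegular v)
    (n : ℕ) (P : {e : E.E // E.s e = v} → Fin n) (hP : Function.Surjective P) :
    OutSplitting E (E.outSplit v n P) where
  πV := Sum.elim (fun u => u.1) (fun _ => v)
  πE := Sum.elim (fun x => x.1.1) (fun f => f.1)
  σ e := if h : E.s e = v then Sum.inr (P ⟨e, h⟩) else Sum.inl ⟨E.s e, h⟩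
  s_eq := by rintro (d | d) <;> rfl
  πV_σ e := by
    by_cases h : E.s e = v
    · simp [h]
    · simp [h]
  πV_r := by
    rintro (⟨⟨e, he⟩, i⟩ | d)
    · exact he.symm
    · rfl
  edge_ext := by
    rintro (⟨⟨e, he⟩, i⟩ | ⟨e, he⟩) (⟨⟨e', he'⟩, i'⟩ | ⟨e', he'⟩) h hr
    · obtain rfl : e = e' := h
      obtain rfl : i = i' := Sum.inr.inj hr
      rfl
    · exact absurd (show E.r e' = v from (show e = e' from h) ▸ he) he'
    · exact absurd (show E.r e = v from (show e = e' from h) ▸ he') he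
    · obtain rfl : e = e' := h
      rfl
  exists_edge := by
    rintro e (⟨u, hu⟩ | i) h
    · obtain rfl : u = E.r e := h
      exact ⟨Sum.inr ⟨e, hu⟩, rfl, rfl⟩
    · exact ⟨Sum.inl (⟨e, Eq.symm h⟩, i), rfl, rfl⟩
  exists_σ := by
    rintro (⟨u, hu⟩ | i) ⟨e, he⟩
    · obtain rfl : E.s e = u := he
      exact ⟨e, dif_neg hu⟩
    · obtain ⟨⟨f, hf⟩, rfl⟩ := hP i
      exact ⟨f, dif_pos hf⟩
  eq_of_sink := by
    rintro (⟨u, hu⟩ | i) (⟨w, hw⟩ | j) h hs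
    · obtain rfl : u = w := h
      rfl
    · exact absurd h hu
    · exact absurd hreg hs
    · exact absurd hreg hs
  surj := by
    intro x
    by_cases hx : x = v
    · obtain ⟨e, he⟩ := hreg
      exact ⟨Sum.inr (P ⟨e, he⟩), hx.symm⟩
    · exact ⟨Sum.inl ⟨x, hx⟩, rfl⟩

/-- Out-splitting at a regular vertex yields an isomorphic Leavitt path
algebra; in particular, Morita equivalent ones. -/
theorem outSplit_iso (K : Type) [Field K] (E : FinGraph) (v : E.V) (hreg : E.IsRegular v)
    (n : ℕ) (P : {e : E.E // E.s e = v} → Fin n) (hP : Function.Surjective P) :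
    Nonempty (LeavittPathAlgebra K E ≃ₐ[K] LeavittPathAlgebra K (E.outSplit v n P)) ∧
    MoritaEquivalent (LeavittPathAlgebra K E) (LeavittPathAlgebra K (E.outSplit v n P)) := by
  let φ := (E.outSplitOutSplitting v hreg n P hP).algEquiv K
  exact ⟨⟨φ⟩, ⟨(ModuleCat.restrictScalarsEquivalenceOfRingEquiv φ.toRingEquiv).symm⟩⟩
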